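/- Let w be a weight on (0,∞) and 1 < r < ∞, and suppose w ∈ B_r (i.e., there is c > 0 with t^r ∫_t^∞ s^{-r} w(s) ds ≤ c ∫₀^t w(s) ds for all t > 0). Then for every non-increasing non-negative function f on (0,∞): (∫₀^∞ ((1/t)∫₀^t f(s) ds)^r w(t) dt)^{1/r} ≲ (∫₀^∞ f(t)^r w(t) dt)^{1/r}, i.e., the Hardy averaging operator P is bounded on the cone of non-increasing functions in L_r(w). -/

import Mathlib

open Set MeasureTheory ENNReal

/-- The `B_r` condition on a weight `w`:
`t^r ∫_t^∞ s^{-r} w(s) ds ≤ c ∫₀^t w(s) ds` for all `t > 0`. -/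
def IsBr (w : ℝ → ℝ) (r : ℝ) : Prop :=
  ∃ c : ℝ, 0 < c ∧ ∀ t : ℝ, 0 < t →
    ENNReal.ofReal (t ^ r) * (∫⁻ s in Ioi t, ENNReal.ofReal (s ^ (-r) * w s)) ≤
      ENNReal.ofReal c * ∫⁻ s in Ioo (0 : ℝ) t, ENNReal.ofReal (w s)


theorem br_growth_step (r : ℝ) (hr : 1 < r) (w : ℝ → ℝ) (hw : ∀ t, 0 ≤ w t) (hwm : Measurable w)
    (t : ℝ) (ht : 0 < t) :
    (∫⁻ s in Ioo (0 : ℝ) (2 * t), ENNReal.ofReal (w s)) +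
      ENNReal.ofReal ((2 * t) ^ r) * (∫⁻ s in Ioi (2 * t), ENNReal.ofReal (s ^ (-r) * w s)) ≤
    (∫⁻ s in Ioo (0 : ℝ) t, ENNReal.ofReal (w s)) +
      ENNReal.ofReal ((2 * t) ^ r) * (∫⁻ s in Ioi t, ENNReal.ofReal (s ^ (-r) * w s)) := by
  have h2 : (0:ℝ) < 2 * t := by positivity
  have e1 : (∫⁻ s in Ioo (0 : ℝ) (2 * t), ENNReal.ofReal (w s)) ≤
      (∫⁻ s in Ioo (0 : ℝ) t, ENNReal.ofReal (w s)) + ∫⁻ s in Ico t (2*t), ENNReal.ofReal (w s) := by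
    rw [← Ioo_union_Ico_eq_Ioo (a := (0:ℝ)) (b := t) (c := 2 * t) ht (by linarith)]
    exact lintegral_union_le _ _ _
  have e2 : (∫⁻ s in Ioi t, ENNReal.ofReal (s ^ (-r) * w s)) =
      (∫⁻ s in Ioc t (2*t), ENNReal.ofReal (s ^ (-r) * w s)) +
      ∫⁻ s in Ioi (2*t), ENNReal.ofReal (s ^ (-r) * w s) := by
    rw [← Ioc_union_Ioi_eq_Ioi (a := t) (b := 2 * t) (by linarith)]
    exact lintegral_union measurableSet_Ioi (Ioc_disjoint_Ioi le_rfl)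
  have e3 : ∫⁻ s in Ico t (2*t), ENNReal.ofReal (w s) ≤
      ENNReal.ofReal ((2 * t) ^ r) * (∫⁻ s in Ioc t (2*t), ENNReal.ofReal (s ^ (-r) * w s)) := by
    rw [← lintegral_const_mul _ (by fun_prop), setLIntegral_congr Ico_ae_eq_Ioc]
    refine setLIntegral_mono (by fun_prop) fun s hs => ?_
    have hs0 : 0 < s := ht.trans hs.1
    rw [← ENNReal.ofReal_mul (by positivity)]
    apply ENNReal.ofReal_le_ofReal
    rw [← mul_assoc]
    refine le_mul_of_one_le_left (hw s) ?_
    rw [Real.rpow_neg hs0.le, ← div_eq_mul_inv, one_le_div (by positivity)]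
    exact Real.rpow_le_rpow hs0.le hs.2 (by linarith)
  rw [e2, mul_add, ← add_assoc]
  gcongr
  exact e1.trans (by gcongr)

theorem br_growth (r : ℝ) (hr : 1 < r) (w : ℝ → ℝ) (hw : ∀ t, 0 ≤ w t) (hwm : Measurable w)
    (c : ℝ) (hc : 0 < c) (hB : ∀ t : ℝ, 0 < t →
    ENNReal.ofReal (t ^ r) * (∫⁻ s in Ioi t, ENNReal.ofReal (s ^ (-r) * w s)) ≤
      ENNReal.ofReal c * ∫⁻ s in Ioo (0 : ℝ) t, ENNReal.ofReal (w s)) (k : ℕ) (t : ℝ) (ht : 0 < t) :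
    (∫⁻ s in Ioo (0 : ℝ) (2 ^ k * t), ENNReal.ofReal (w s)) ≤
      ENNReal.ofReal ((1 + c) * (1 + (2 ^ r - 1) * (c / (1 + c))) ^ k) *
      ∫⁻ s in Ioo (0 : ℝ) t, ENNReal.ofReal (w s) := by
  have hm : (0:ℝ) ≤ 2 ^ r - 1 := by
    have := Real.one_le_rpow (x := 2) (z := r) (by norm_num) (by linarith)
    linarith
  set W : ℝ → ℝ≥0∞ := fun t => ∫⁻ s in Ioo (0 : ℝ) t, ENNReal.ofReal (w s) with hW
  set V : ℝ → ℝ≥0∞ := fun t => ENNReal.ofReal (t ^ r) *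
    (∫⁻ s in Ioi t, ENNReal.ofReal (s ^ (-r) * w s)) with hV
  set ρ : ℝ := 1 + (2 ^ r - 1) * (c / (1 + c)) with hρ
  have hρ0 : 0 ≤ ρ := by positivity
  have step : ∀ t, 0 < t → W (2 * t) + V (2 * t) ≤ ENNReal.ofReal ρ * (W t + V t) := by
    intro t ht
    have h1 : V t ≤ ENNReal.ofReal (c / (1 + c)) * (W t + V t) := by
      calc V t = ENNReal.ofReal (1 / (1 + c)) * V t + ENNReal.ofReal (c / (1 + c)) * V t := by
            rw [← add_mul, ← ENNReal.ofReal_add (by positivity) (by positivity)]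
            rw [← add_div, div_self (by positivity)]; simp
        _ ≤ ENNReal.ofReal (1 / (1 + c)) * (ENNReal.ofReal c * W t)
            + ENNReal.ofReal (c / (1 + c)) * V t := by
            gcongr; exact hB t ht
        _ = _ := by
            rw [← mul_assoc, ← ENNReal.ofReal_mul (by positivity), mul_add]
            congr 3; ring
    have h2 := br_growth_step r hr w hw hwm t ht
    refine h2.trans ?_
    have h3 : ENNReal.ofReal ((2 * t) ^ r) * (∫⁻ s in Ioi t, ENNReal.ofReal (s ^ (-r) * w s))
        = V t + ENNReal.ofReal (2 ^ r - 1) * V t := by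
      rw [Real.mul_rpow (by norm_num) ht.le, ENNReal.ofReal_mul (by positivity), mul_assoc]
      have e : V t + ENNReal.ofReal (2 ^ r - 1) * V t = ENNReal.ofReal (2 ^ r) * V t := by
        have : ENNReal.ofReal (2 ^ r) = 1 + ENNReal.ofReal (2 ^ r - 1) := by
          rw [← ENNReal.ofReal_one, ← ENNReal.ofReal_add (by norm_num) hm]
          congr 1; ring
        rw [this, add_mul, one_mul]
      rw [e]
    rw [h3, ← add_assoc, hρ, ENNReal.ofReal_add (by norm_num) (by positivity), add_mul,
      ENNReal.ofReal_one, one_mul, ENNReal.ofReal_mul hm, mul_assoc]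
    gcongr
  have iter : ∀ k : ℕ, W (2 ^ k * t) + V (2 ^ k * t) ≤ ENNReal.ofReal (ρ ^ k) * (W t + V t) := by
    intro k
    induction k with
    | zero => simp
    | succ k ih =>
      have := step (2 ^ k * t) (by positivity)
      rw [← mul_assoc, ← pow_succ'] at this
      refine this.trans ?_
      rw [pow_succ' ρ, ENNReal.ofReal_mul hρ0, mul_assoc]
      gcongr
  calc W (2 ^ k * t) ≤ _ := le_self_add
    _ ≤ _ := iter k
    _ ≤ ENNReal.ofReal (ρ ^ k) * (W t + ENNReal.ofReal c * W t) := by gcongr; exact hB t ht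
    _ = _ := by
      rw [mul_comm (1 + c), ENNReal.ofReal_mul (by positivity), mul_assoc,
        ENNReal.ofReal_add (by norm_num) hc.le, add_mul]
      simp [hW]

theorem downset_dilate (μ : Measure ℝ) (hμ : μ ≪ volume) (K : ℝ≥0∞) (hK : 1 ≤ K) (l : ℝ) (hl : 0 < l)
    (h : ∀ t, 0 < t → μ (Ioo 0 (l * t)) ≤ K * μ (Ioo 0 t)) (S : Set ℝ) (hS : S ⊆ Ioi 0)
    (hd : ∀ x ∈ S, ∀ y, 0 < y → y ≤ x → y ∈ S) :
    μ {t | 0 < t ∧ t / l ∈ S} ≤ K * μ S := by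
  rcases S.eq_empty_or_nonempty with rfl | ⟨x, hx⟩
  · simp
  by_cases hb : BddAbove S
  · have hb0 : 0 < sSup S := (hS hx).trans_le (le_csSup hb hx)
    have h1 : Ioo 0 (sSup S) ⊆ S := by
      intro y hy
      obtain ⟨z, hz, hyz⟩ := exists_lt_of_lt_csSup ⟨x, hx⟩ hy.2
      exact hd z hz y hy.1 hyz.le
    have h2 : {t | 0 < t ∧ t / l ∈ S} ⊆ Ioc 0 (l * sSup S) := by
      rintro t ⟨ht, hts⟩
      refine ⟨ht, ?_⟩
      have := le_csSup hb hts
      rw [div_le_iff₀ hl] at this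
      linarith
    calc _ ≤ μ (Ioc 0 (l * sSup S)) := measure_mono h2
      _ = μ (Ioo 0 (l * sSup S)) := (measure_congr (hμ.ae_le (Ioo_ae_eq_Ioc (μ := volume)))).symm
      _ ≤ _ := h _ hb0
      _ ≤ _ := by gcongr
  · have : S = Ioi 0 := by
      refine hS.antisymm fun y hy => ?_
      obtain ⟨z, hz, hyz⟩ := not_bddAbove_iff.1 hb y
      exact hd z hz y hy hyz.le
    calc _ ≤ μ S := measure_mono fun t ht => this ▸ ht.1
      _ ≤ _ := le_mul_of_one_le_left' hK

theorem dilate_lintegral (r : ℝ) (hr : 1 < r) (μ : Measure ℝ)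
    (hμ : μ ≪ volume.restrict (Ioi 0)) (K : ℝ≥0∞) (hK : 1 ≤ K) (hKt : K ≠ ⊤) (l : ℝ) (hl : 0 < l)
    (h : ∀ t, 0 < t → μ (Ioo 0 (l * t)) ≤ K * μ (Ioo 0 t)) (f : ℝ → ℝ) (hf : ∀ x, 0 ≤ f x)
    (hfa : AntitoneOn f (Ioi 0)) :
    ∫⁻ t, ENNReal.ofReal (f (t / l)) ^ r ∂μ ≤ K * ∫⁻ t, ENNReal.ofReal (f t) ^ r ∂μ := by
  have hr0 : 0 ≤ r := by linarith
  have hμ0 : μ (Ioi 0)ᶜ = 0 := hμ (by rw [Measure.restrict_apply measurableSet_Ioi.compl, compl_inter_self, measure_empty])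
  have hae : ∀ s : Set ℝ, μ s = μ (s ∩ Ioi 0) := fun s =>
    (measure_inter_conull hμ0).symm
  have hfl : AntitoneOn (fun t => f (t / l)) (Ioi 0) := fun x hx y hy hxy =>
    hfa (div_pos hx hl) (div_pos hy hl) (by gcongr)
  have m1 : AEMeasurable f μ :=
    (aemeasurable_restrict_of_antitoneOn measurableSet_Ioi hfa).mono_ac hμ
  have m2 : AEMeasurable (fun t => f (t / l)) μ :=
    (aemeasurable_restrict_of_antitoneOn measurableSet_Ioi hfl).mono_ac hμ
  simp_rw [ENNReal.ofReal_rpow_of_nonneg (hf _) hr0]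
  rw [lintegral_eq_lintegral_meas_lt μ (.of_forall fun t => Real.rpow_nonneg (hf _) _)
      (m2.pow_const r),
    lintegral_eq_lintegral_meas_lt μ (.of_forall fun t => Real.rpow_nonneg (hf _) _)
      (m1.pow_const r), ← lintegral_const_mul' _ _ ?_]
  · refine lintegral_mono fun a => ?_
    have := downset_dilate μ (hμ.trans Measure.absolutelyContinuous_restrict) K hK l hl h
      ({t | a < f t ^ r} ∩ Ioi 0) inter_subset_right
      (fun x hx y hy hyx => ⟨hx.1.trans_le
        (Real.rpow_le_rpow (hf _) (hfa hy hx.2 hyx) hr0), hy⟩)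
    rw [← hae] at this
    refine le_trans ?_ this
    rw [hae]
    exact measure_mono fun t ht => ⟨ht.2, ht.1, div_pos ht.2 hl⟩
  · exact hKt

theorem minkowski_tsum (r : ℝ) (hr : 1 < r) (μ : Measure ℝ) (g : ℕ → ℝ → ℝ≥0∞)
    (hg : ∀ k, AEMeasurable (g k) μ) :
    (∫⁻ t, (∑' k, g k t) ^ r ∂μ) ^ (1 / r) ≤ ∑' k, (∫⁻ t, g k t ^ r ∂μ) ^ (1 / r) := by
  have hr0 : 0 < r := by linarith
  have fin : ∀ n : ℕ, (∫⁻ t, (∑ k ∈ Finset.range n, g k t) ^ r ∂μ) ^ (1 / r) ≤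
      ∑ k ∈ Finset.range n, (∫⁻ t, g k t ^ r ∂μ) ^ (1 / r) := by
    intro n
    induction n with
    | zero => simp [hr0]
    | succ n ih =>
      simp_rw [Finset.sum_range_succ]
      refine (ENNReal.lintegral_Lp_add_le (f := fun t => ∑ k ∈ Finset.range n, g k t)
        (Finset.aemeasurable_fun_sum _ fun k _ => hg k) (hg n) hr.le).trans ?_
      gcongr
  have e : ∀ t, (∑' k, g k t) ^ r = ⨆ n : ℕ, (∑ k ∈ Finset.range n, g k t) ^ r := by
    intro t
    rw [ENNReal.tsum_eq_iSup_nat]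
    exact (ENNReal.orderIsoRpow r hr0).map_iSup _
  simp_rw [e]
  rw [lintegral_iSup' (fun n => (Finset.aemeasurable_fun_sum _ fun k _ => hg k).pow_const r)]
  · have := (ENNReal.orderIsoRpow (1/r) (by positivity)).map_iSup
      (fun n : ℕ => ∫⁻ t, (∑ k ∈ Finset.range n, g k t) ^ r ∂μ)
    simp only [ENNReal.orderIsoRpow_apply] at this
    rw [this]
    exact iSup_le fun n => (fin n).trans (ENNReal.sum_le_tsum _)
  · refine .of_forall fun t m n hmn => ?_
    dsimp only
    gcongr

theorem avg_le (f : ℝ → ℝ) (hfa : AntitoneOn f (Ioi 0)) (t : ℝ) (ht : 0 < t) :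
    (∫⁻ s in Ioo (0 : ℝ) t, ENNReal.ofReal (f s)) / ENNReal.ofReal t ≤
      ∑' k : ℕ, ENNReal.ofReal ((1 / 2) ^ (k + 1)) * ENNReal.ofReal (f (t / 2 ^ (k + 1))) := by
  have hsub : Ioo (0:ℝ) t ⊆ ⋃ k : ℕ, Ioc (t / 2 ^ (k + 1)) (t / 2 ^ k) := by
    intro s hs
    obtain ⟨k, hk1, hk2⟩ := exists_nat_pow_near (x := t / s) (y := 2)
      ((one_le_div hs.1).2 hs.2.le) (by norm_num)
    rw [le_div_iff₀ hs.1] at hk1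
    rw [div_lt_iff₀ hs.1] at hk2
    refine mem_iUnion.2 ⟨k, ?_, ?_⟩
    · rw [div_lt_iff₀ (by positivity)]; linarith
    · rw [le_div_iff₀ (by positivity)]; linarith
  rw [ENNReal.div_le_iff_le_mul (by simp [ht]) (by simp), ← ENNReal.tsum_mul_right]
  refine (lintegral_mono_set hsub).trans ((lintegral_iUnion_le _ _).trans ?_)
  refine ENNReal.tsum_le_tsum fun k => ?_
  calc _ ≤ ∫⁻ s in Ioc (t / 2 ^ (k + 1)) (t / 2 ^ k), ENNReal.ofReal (f (t / 2 ^ (k + 1))) := by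
        refine setLIntegral_mono (by fun_prop) fun s hs => ENNReal.ofReal_le_ofReal ?_
        have : 0 < t / 2 ^ (k + 1) := by positivity
        exact hfa this (this.trans hs.1) hs.1.le
    _ = _ := by
      rw [setLIntegral_const, Real.volume_Ioc, mul_right_comm,
        ← ENNReal.ofReal_mul (p := (1 / 2) ^ (k + 1)) (by positivity), mul_comm]
      congr 2
      rw [div_pow, one_pow, pow_succ]
      field_simp
      ring

/-- If `1 < r < ∞` and `w ∈ B_r`, then the Hardy averaging
operator `(Pf)(t) = (1/t)∫₀^t f(s) ds` is bounded on the cone of non-negative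
non-increasing functions in `L_r(w)`:
`(∫₀^∞ ((1/t)∫₀^t f)^r w(t) dt)^{1/r} ≲ (∫₀^∞ f(t)^r w(t) dt)^{1/r}`,
with a constant depending only on `r` and the `B_r` constant of `w`. -/
theorem hardy_on_decreasing (r : ℝ) (hr : 1 < r)
    (w : ℝ → ℝ) (hw : ∀ t, 0 ≤ w t) (hwm : Measurable w) (hBr : IsBr w r) :
    ∃ C : ℝ, 0 < C ∧ ∀ f : ℝ → ℝ, (∀ x, 0 ≤ f x) → AntitoneOn f (Ioi 0) →
      (∫⁻ t in Ioi (0 : ℝ),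
          ((∫⁻ s in Ioo (0 : ℝ) t, ENNReal.ofReal (f s)) / ENNReal.ofReal t) ^ r *
            ENNReal.ofReal (w t)) ^ (1 / r) ≤
        ENNReal.ofReal C *
          (∫⁻ t in Ioi (0 : ℝ),
            ENNReal.ofReal (f t) ^ r * ENNReal.ofReal (w t)) ^ (1 / r) := by
  obtain ⟨c, hc, hB⟩ := hBr
  have hr0 : 0 < r := by linarith
  have hgrow := br_growth r hr w hw hwm c hc hB
  have h2r : (1:ℝ) < 2 ^ r := Real.one_lt_rpow (by norm_num) hr0
  set ρ : ℝ := 1 + (2 ^ r - 1) * (c / (1 + c)) with hρ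
  have hρ1 : 1 ≤ ρ := by
    have : 0 ≤ (2 ^ r - 1) * (c / (1 + c)) := mul_nonneg (by linarith) (by positivity)
    linarith
  have hρ2 : ρ < 2 ^ r := by
    have : c / (1 + c) < 1 := by rw [div_lt_one (by positivity)]; linarith
    nlinarith
  set q : ℝ := 1 / 2 * ρ ^ (1 / r) with hq
  have hq0 : 0 ≤ q := by positivity
  have hq1 : q < 1 := by
    have : ρ ^ (1 / r) < (2 ^ r) ^ (1 / r) :=
      Real.rpow_lt_rpow (by linarith) hρ2 (by positivity)
    rw [← Real.rpow_mul (by norm_num), mul_one_div_cancel hr0.ne', Real.rpow_one] at this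
    linarith
  set A : ℕ → ℝ := fun k => (1 + c) ^ (1 / r) * q ^ (k + 1) with hA
  have hA0 : ∀ k, 0 ≤ A k := fun k => by positivity
  have hAs : Summable A :=
    ((summable_nat_add_iff 1).2 (summable_geometric_of_lt_one hq0 hq1)).mul_left _
  refine ⟨∑' k, A k + 1, by have : 0 ≤ ∑' k, A k := tsum_nonneg hA0; linarith, fun f hf hfa => ?_⟩
  set μ : Measure ℝ := (volume.restrict (Ioi 0)).withDensity (fun t => ENNReal.ofReal (w t)) with hμd
  have hwm' : Measurable (fun t => ENNReal.ofReal (w t)) := by fun_prop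
  have hμ : μ ≪ volume.restrict (Ioi 0) := withDensity_absolutelyContinuous _ _
  have hint : ∀ g : ℝ → ℝ≥0∞, ∫⁻ t in Ioi (0:ℝ), g t * ENNReal.ofReal (w t) = ∫⁻ t, g t ∂μ := by
    intro g
    rw [hμd, lintegral_withDensity_eq_lintegral_mul_non_measurable _ hwm' (by simp)]
    simp [mul_comm]
  have hμI : ∀ t, μ (Ioo 0 t) = ∫⁻ s in Ioo (0 : ℝ) t, ENNReal.ofReal (w s) := by
    intro t
    rw [hμd, withDensity_apply _ measurableSet_Ioo, Measure.restrict_restrict measurableSet_Ioo,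
      inter_eq_left.2 Ioo_subset_Ioi_self]
  rw [hint, hint]
  have hdil : ∀ k : ℕ, ∫⁻ t, ENNReal.ofReal (f (t / 2 ^ k)) ^ r ∂μ ≤
      ENNReal.ofReal ((1 + c) * ρ ^ k) * ∫⁻ t, ENNReal.ofReal (f t) ^ r ∂μ := by
    intro k
    refine dilate_lintegral r hr μ hμ _ ?_ ENNReal.ofReal_ne_top (2 ^ k) (by positivity) ?_ f hf hfa
    · rw [ENNReal.one_le_ofReal]
      have := one_le_pow₀ hρ1 (n := k)
      nlinarith
    · intro t ht
      rw [hμI, hμI]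
      exact hgrow k t ht
  have hpos : ∀ᵐ t ∂μ, 0 < t := hμ.ae_le (ae_restrict_mem measurableSet_Ioi)
  set N := (∫⁻ t, ENNReal.ofReal (f t) ^ r ∂μ) ^ (1 / r) with hN
  calc _ ≤ (∫⁻ t, (∑' k : ℕ, ENNReal.ofReal ((1 / 2) ^ (k + 1)) *
          ENNReal.ofReal (f (t / 2 ^ (k + 1)))) ^ r ∂μ) ^ (1 / r) := by
        refine ENNReal.rpow_le_rpow (lintegral_mono_ae ?_) (by positivity)
        filter_upwards [hpos] with t ht
        exact ENNReal.rpow_le_rpow (avg_le f hfa t ht) hr0.le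
    _ ≤ ∑' k : ℕ, (∫⁻ t, (ENNReal.ofReal ((1 / 2) ^ (k + 1)) *
          ENNReal.ofReal (f (t / 2 ^ (k + 1)))) ^ r ∂μ) ^ (1 / r) := by
        refine minkowski_tsum r hr μ _ fun k => ?_
        have hfl : AntitoneOn (fun t => f (t / 2 ^ (k + 1))) (Ioi 0) := fun x hx y hy hxy =>
          
          have h2 : (0:ℝ) < 2 ^ (k + 1) := by positivity
          hfa (div_pos hx h2) (div_pos hy h2) (by gcongr)
        exact ((aemeasurable_restrict_of_antitoneOn measurableSet_Ioi hfl).mono_ac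
          hμ).ennreal_ofReal.const_mul _
    _ ≤ ∑' k : ℕ, ENNReal.ofReal (A k) * N := by
        refine ENNReal.tsum_le_tsum fun k => ?_
        simp_rw [ENNReal.mul_rpow_of_nonneg _ _ hr0.le]
        rw [lintegral_const_mul' _ _ (by simp [hr0.le]),
          ENNReal.mul_rpow_of_nonneg _ _ (by positivity), ← ENNReal.rpow_mul,
          mul_one_div_cancel hr0.ne', ENNReal.rpow_one]
        calc _ ≤ ENNReal.ofReal ((1 / 2) ^ (k + 1)) * (ENNReal.ofReal ((1 + c) * ρ ^ (k + 1)) *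
              ∫⁻ t, ENNReal.ofReal (f t) ^ r ∂μ) ^ (1 / r) := by
              gcongr; exact hdil (k + 1)
          _ = _ := by
              rw [ENNReal.mul_rpow_of_nonneg _ _ (by positivity), ← mul_assoc,
                ENNReal.ofReal_rpow_of_nonneg (by positivity) (by positivity),
                ← ENNReal.ofReal_mul (by positivity)]
              congr 2
              have e : (ρ ^ (k + 1)) ^ (1 / r) = (ρ ^ (1 / r)) ^ (k + 1) := by
                rw [← Real.rpow_natCast, ← Real.rpow_natCast,
                  ← Real.rpow_mul (by positivity), ← Real.rpow_mul (by positivity),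
                  mul_comm (1 / r)]
              simp only [hA, hq]
              rw [Real.mul_rpow (by positivity) (by positivity), e, mul_pow]
              ring
    _ = ENNReal.ofReal (∑' k, A k) * N := by
        rw [ENNReal.tsum_mul_right, ENNReal.ofReal_tsum_of_nonneg hA0 hAs]
    _ ≤ _ := by gcongr; linarith
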